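/- arXiv:1604.08643 — 2 statements merged into one kernel-verified Lean document; each statement's English description precedes it below -/
import Mathlib

section
/- If a monic polynomial φ of degree m ≥ 2 minimizes the L^q norm on [a,b] among monic polynomials of degree m (1 ≤ q ≤ ∞), then all m roots of φ are real, simple, and lie in [a,b]. -/
open MeasureTheory Polynomial
open scoped ENNReal

/-!
Splitting off the points of `[a, b]` where `φ` changes sign gives `φ = p * g`, where `g` is the
product of the factors `X - C t` over a finite set of points `t` of `[a, b]` and, up to changing the
signs of `p` and `g`, the polynomial `p` is nonnegative on `[a, b]`. If `p` is not constant, then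
`(p - t) * g` is again monic of the degree of `φ`, and for small `t > 0` it has smaller norm: on
`{p ≥ t}` passing from `p` to `p - t` scales `p` by at most `1 - t / max p`, a gain of order `t`,
while the loss on `{p < t}` is at most `t * ‖1_{p < t} g‖ = o(t)` if `q < ∞`, and if `q = ∞` the
values there are at most `t * ‖g‖`, too small to affect the supremum. So a minimizer has `p = 1`.
-/

open Filter
open scoped Topology

section Perturbation

variable {α : Type*} [MeasurableSpace α] {μ : Measure α} {q : ℝ≥0∞}

lemma tendsto_eLpNorm_indicator_zero {ι E : Type*} [NormedAddCommGroup E] {l : Filter ι}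
    [l.IsCountablyGenerated] {s : ι → Set α} {f : α → E} (hs : ∀ i, MeasurableSet (s i))
    (hsl : ∀ᵐ x ∂μ, ∀ᶠ i in l, x ∉ s i) (hf : MemLp f q μ) (hq : q ≠ ∞) :
    Tendsto (fun i ↦ eLpNorm ((s i).indicator f) q μ) l (𝓝 0) := by
  rcases eq_or_ne q 0 with rfl | hq₀
  · simpa using tendsto_const_nhds
  have hq_pos : 0 < q.toReal := ENNReal.toReal_pos hq₀ hq
  suffices Tendsto (fun i ↦ ∫⁻ x, ‖(s i).indicator f x‖ₑ ^ q.toReal ∂μ) l (𝓝 0) by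
    have h := this.ennrpow_const (1 / q.toReal)
    rw [ENNReal.zero_rpow_of_pos (one_div_pos.2 hq_pos)] at h
    simpa only [eLpNorm_eq_lintegral_rpow_enorm_toReal hq₀ hq] using h
  rw [← lintegral_zero (μ := μ)]
  refine tendsto_lintegral_filter_of_dominated_convergence' (fun x ↦ ‖f x‖ₑ ^ q.toReal)
    (.of_forall fun i ↦ (hf.1.indicator (hs i)).enorm.pow_const _)
    (.of_forall fun i ↦ .of_forall fun x ↦ ?_)
    (lintegral_rpow_enorm_lt_top_of_eLpNorm_lt_top hq₀ hq hf.2).ne ?_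
  · gcongr
    exact enorm_indicator_le_enorm_self f x
  · filter_upwards [hsl] with x hx
    refine tendsto_const_nhds.congr' ?_
    filter_upwards [hx] with i hi
    simp [hi, hq_pos]

lemma abs_sub_le_one_sub_div_mul {u t M : ℝ} (ht : 0 ≤ t) (hM : 0 < M) (htu : t ≤ u)
    (huM : u ≤ M) : |u - t| ≤ (1 - t / M) * u := by
  have : t / M * u ≤ t := by
    rw [div_mul_eq_mul_div, div_le_iff₀ hM]
    gcongr
  rw [abs_of_nonneg (sub_nonneg.2 htu)]
  linarith

variable {p g : α → ℝ} {M : ℝ}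

lemma eventually_eLpNorm_top_sub_mul_lt (hM : 0 < M) (hp : ∀ᵐ x ∂μ, 0 ≤ p x)
    (hpM : ∀ᵐ x ∂μ, p x ≤ M) (hg : eLpNorm g ∞ μ ≠ ∞)
    (hpg₀ : eLpNorm (fun x ↦ p x * g x) ∞ μ ≠ 0) (hpg : eLpNorm (fun x ↦ p x * g x) ∞ μ ≠ ∞) :
    ∀ᶠ t in 𝓝[>] (0 : ℝ),
      eLpNorm (fun x ↦ (p x - t) * g x) ∞ μ < eLpNorm (fun x ↦ p x * g x) ∞ μ := by
  set N := eLpNorm (fun x ↦ p x * g x) ∞ μ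
  have hsmall : ∀ᶠ t : ℝ in 𝓝[>] 0, ENNReal.ofReal t * eLpNorm g ∞ μ < N := by
    have : Tendsto (fun t : ℝ ↦ ENNReal.ofReal t * eLpNorm g ∞ μ) (𝓝 0) (𝓝 0) := by
      simpa using ENNReal.Tendsto.mul_const (ENNReal.tendsto_ofReal (tendsto_id (x := 𝓝 0)))
        (Or.inr hg)
    exact (this.mono_left nhdsWithin_le_nhds).eventually_lt_const (pos_iff_ne_zero.2 hpg₀)
  filter_upwards [hsmall, self_mem_nhdsWithin] with t htN (ht : 0 < t)
  have hshrink : ENNReal.ofReal (1 - t / M) * N < N := by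
    nth_rw 2 [← one_mul N]
    rw [ENNReal.mul_lt_mul_iff_left hpg₀ hpg, ENNReal.ofReal_lt_one]
    linarith [div_pos ht hM]
  refine lt_of_le_of_lt ?_ (max_lt hshrink htN)
  rw [eLpNorm_exponent_top]
  refine eLpNormEssSup_le_of_ae_enorm_bound ?_
  filter_upwards [hp, hpM, ae_le_eLpNormEssSup (f := fun x ↦ p x * g x) (μ := μ),
    ae_le_eLpNormEssSup (f := g) (μ := μ)] with x hpx hpMx hpgx hgx
  rcases le_or_gt t (p x) with h | h
  · refine le_max_of_le_left (le_trans ?_ (mul_le_mul_right hpgx _))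
    rw [enorm_mul, enorm_mul, ← mul_assoc, Real.enorm_eq_ofReal_abs, Real.enorm_of_nonneg hpx,
      ← ENNReal.ofReal_mul' hpx]
    gcongr
    exact abs_sub_le_one_sub_div_mul ht.le hM h hpMx
  · refine le_max_of_le_right (le_trans ?_ (mul_le_mul_right hgx _))
    rw [enorm_mul, Real.enorm_eq_ofReal_abs]
    gcongr
    exact abs_le.2 ⟨by linarith, by linarith⟩

lemma eLpNorm_sub_mul_le_add_indicator (hq : 1 ≤ q) (hpm : Measurable p)
    (hgm : AEStronglyMeasurable g μ) (hM : 0 < M) (hp : ∀ᵐ x ∂μ, 0 ≤ p x) (hpM : ∀ᵐ x ∂μ, p x ≤ M)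
    {t : ℝ} (ht : 0 ≤ t) (htM : t ≤ M) :
    eLpNorm (fun x ↦ (p x - t) * g x) q μ ≤
      ENNReal.ofReal (1 - t / M) * eLpNorm (fun x ↦ p x * g x) q μ +
        ENNReal.ofReal t * eLpNorm ({x | p x < t}.indicator g) q μ := by
  have hε : 0 ≤ 1 - t / M := sub_nonneg.2 ((div_le_one hM).2 htM)
  have hs : MeasurableSet {x | p x < t} := measurableSet_lt hpm measurable_const
  calc
    _ ≤ eLpNorm ((1 - t / M) • (fun x ↦ ‖p x * g x‖) +
          t • fun x ↦ ‖{x | p x < t}.indicator g x‖) q μ := by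
      refine eLpNorm_mono_ae_real ?_
      filter_upwards [hp, hpM] with x hpx hpMx
      simp only [Pi.add_apply, Pi.smul_apply, smul_eq_mul, norm_mul, Real.norm_eq_abs,
        abs_of_nonneg hpx, ← mul_assoc]
      rcases le_or_gt t (p x) with h | h
      · refine le_add_of_le_of_nonneg ?_ (by positivity)
        gcongr
        exact abs_sub_le_one_sub_div_mul ht hM h hpMx
      · refine le_add_of_nonneg_of_le (by positivity) ?_
        rw [Set.indicator_of_mem (show x ∈ {x | p x < t} from h)]
        gcongr
        exact abs_le.2 ⟨by linarith, by linarith⟩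
    _ ≤ eLpNorm ((1 - t / M) • fun x ↦ ‖p x * g x‖) q μ +
          eLpNorm (t • fun x ↦ ‖{x | p x < t}.indicator g x‖) q μ :=
      eLpNorm_add_le ((hpm.aestronglyMeasurable.mul hgm).norm.const_smul _)
        ((hgm.indicator hs).norm.const_smul _) hq
    _ = _ := by
      rw [eLpNorm_const_smul, eLpNorm_const_smul, eLpNorm_norm, eLpNorm_norm,
        Real.enorm_of_nonneg hε, Real.enorm_of_nonneg ht]

lemma eventually_eLpNorm_sub_mul_lt_of_ne_top (hq : 1 ≤ q) (hq' : q ≠ ∞) (hpm : Measurable p)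
    (hM : 0 < M) (hp : ∀ᵐ x ∂μ, 0 < p x) (hpM : ∀ᵐ x ∂μ, p x ≤ M) (hg : MemLp g q μ)
    (hpg₀ : eLpNorm (fun x ↦ p x * g x) q μ ≠ 0) (hpg : eLpNorm (fun x ↦ p x * g x) q μ ≠ ∞) :
    ∀ᶠ t in 𝓝[>] (0 : ℝ),
      eLpNorm (fun x ↦ (p x - t) * g x) q μ < eLpNorm (fun x ↦ p x * g x) q μ := by
  set N := eLpNorm (fun x ↦ p x * g x) q μ
  have htendsto : Tendsto (fun t ↦ eLpNorm ({x | p x < t}.indicator g) q μ) (𝓝[>] 0) (𝓝 0) := by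
    refine tendsto_eLpNorm_indicator_zero (fun t ↦ measurableSet_lt hpm measurable_const) ?_ hg hq'
    filter_upwards [hp] with x hx
    filter_upwards [Ioo_mem_nhdsGT hx] with t ht
    exact not_lt.2 ht.2.le
  have hN : 0 < N / ENNReal.ofReal M := ENNReal.div_pos hpg₀ ENNReal.ofReal_ne_top
  filter_upwards [htendsto.eventually_lt_const hN, Ioo_mem_nhdsGT hM] with t htN ⟨ht, htM⟩
  have hε : 0 ≤ 1 - t / M := sub_nonneg.2 ((div_le_one hM).2 htM.le)
  calc
    _ ≤ ENNReal.ofReal (1 - t / M) * N +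
          ENNReal.ofReal t * eLpNorm ({x | p x < t}.indicator g) q μ :=
      eLpNorm_sub_mul_le_add_indicator hq hpm hg.1 hM (hp.mono fun _ ↦ le_of_lt) hpM ht.le htM.le
    _ < ENNReal.ofReal (1 - t / M) * N + ENNReal.ofReal t * (N / ENNReal.ofReal M) := by
      refine ENNReal.add_lt_add_left (ENNReal.mul_ne_top ENNReal.ofReal_ne_top hpg) ?_
      exact ENNReal.mul_lt_mul_right (ENNReal.ofReal_pos.2 ht).ne' ENNReal.ofReal_ne_top htN
    _ = ENNReal.ofReal (1 - t / M + t / M) * N := by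
      rw [ENNReal.ofReal_add hε (by positivity), ENNReal.ofReal_div_of_pos hM, add_mul]
      simp only [div_eq_mul_inv]
      ring
    _ = N := by simp

lemma eventually_eLpNorm_sub_mul_lt (hq : 1 ≤ q) (hpm : Measurable p) (hM : 0 < M)
    (hp : ∀ᵐ x ∂μ, 0 < p x) (hpM : ∀ᵐ x ∂μ, p x ≤ M) (hg : MemLp g q μ)
    (hg₀ : eLpNorm g q μ ≠ 0) :
    ∀ᶠ t in 𝓝[>] (0 : ℝ),
      eLpNorm (fun x ↦ (p x - t) * g x) q μ < eLpNorm (fun x ↦ p x * g x) q μ := by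
  have hq₀ : q ≠ 0 := (zero_lt_one.trans_le hq).ne'
  have hpgm : AEStronglyMeasurable (fun x ↦ p x * g x) μ := hpm.aestronglyMeasurable.mul hg.1
  have hpg : eLpNorm (fun x ↦ p x * g x) q μ ≠ ∞ := by
    refine (hg.of_le_mul (c := M) hpgm ?_).2.ne
    filter_upwards [hp, hpM] with x hpx hpMx
    rw [norm_mul, Real.norm_of_nonneg hpx.le]
    gcongr
  have hpg₀ : eLpNorm (fun x ↦ p x * g x) q μ ≠ 0 := by
    contrapose! hg₀
    rw [eLpNorm_eq_zero_iff hpgm hq₀] at hg₀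
    rw [eLpNorm_eq_zero_iff hg.1 hq₀]
    filter_upwards [hp, hg₀] with x hpx hx
    exact (mul_eq_zero.1 hx).resolve_left hpx.ne'
  rcases eq_or_ne q ∞ with rfl | hq'
  · exact eventually_eLpNorm_top_sub_mul_lt hM (hp.mono fun _ ↦ le_of_lt) hpM hg.2.ne hpg₀ hpg
  · exact eventually_eLpNorm_sub_mul_lt_of_ne_top hq hq' hpm hM hp hpM hg hpg₀ hpg

end Perturbation

section Polynomial

lemma ae_eval_ne_zero {R : Type*} [CommRing R] [IsDomain R] [MeasurableSpace R] {μ : Measure R}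
    [NullSingletonClass μ] {p : R[X]} (hp : p ≠ 0) : ∀ᵐ x ∂μ, p.eval x ≠ 0 :=
  measure_eq_zero_iff_ae_notMem.1 ((finite_setOfPred_isRoot hp).measure_zero μ)

lemma exists_forall_abs_eval_le {s : Set ℝ} (hs : Bornology.IsBounded s) (p : ℝ[X]) :
    ∃ M > 0, ∀ x ∈ s, |p.eval x| ≤ M := by
  obtain ⟨M, hM⟩ := hs.isCompact_closure.exists_bound_of_continuousOn p.continuousOn
  exact ⟨max M 1, by positivity, fun x hx ↦ le_max_of_le_left (hM x (subset_closure hx))⟩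

lemma exists_eq_mul_prod_X_sub_C {s : Set ℝ} (hs : IsPreconnected s) (φ : ℝ[X]) :
    ∃ (p : ℝ[X]) (T : Finset ℝ), φ = p * ∏ t ∈ T, (X - C t) ∧ ↑T ⊆ s ∧
      ((∀ x ∈ s, 0 ≤ p.eval x) ∨ ∀ x ∈ s, p.eval x ≤ 0) := by
  induction hn : φ.natDegree using Nat.strong_induction_on generalizing φ with
  | _ n ih
  by_cases hsign : (∀ x ∈ s, 0 ≤ φ.eval x) ∨ ∀ x ∈ s, φ.eval x ≤ 0
  · exact ⟨φ, ∅, by simp, by simp, hsign⟩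
  obtain ⟨⟨x, hx, hφx⟩, y, hy, hφy⟩ : (∃ x ∈ s, φ.eval x < 0) ∧ ∃ y ∈ s, 0 < φ.eval y := by
    simpa using hsign
  obtain ⟨c, hcs, hc⟩ := hs.intermediate_value hx hy φ.continuousOn ⟨hφx.le, hφy.le⟩
  obtain ⟨ψ, rfl⟩ := dvd_iff_isRoot.2 hc
  have hψ : ψ ≠ 0 := by
    rintro rfl
    simp at hφx
  have hdeg : ψ.natDegree < n := by
    rw [← hn, (monic_X_sub_C c).natDegree_mul' hψ, natDegree_X_sub_C]
    lia
  obtain ⟨p, T, rfl, hTs, hp⟩ := ih _ hdeg ψ rfl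
  by_cases hcT : c ∈ T
  -- A root met twice is absorbed into `p`, as `(X - C c) ^ 2` does not change its sign.
  · refine ⟨(X - C c) ^ 2 * p, T.erase c, ?_, fun t ht ↦ hTs (Finset.mem_of_mem_erase ht), ?_⟩
    · rw [← Finset.mul_prod_erase T _ hcT]
      ring
    · simp only [eval_mul, eval_pow]
      exact hp.imp (fun h x hx ↦ mul_nonneg (sq_nonneg _) (h x hx))
        (fun h x hx ↦ mul_nonpos_of_nonneg_of_nonpos (sq_nonneg _) (h x hx))
  · refine ⟨p, insert c T, ?_, by simp [Set.insert_subset_iff, hcs, hTs], hp⟩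
    rw [Finset.prod_insert hcT]
    ring

lemma prod_orderEmbOfFin {α β : Type*} [LinearOrder α] [CommMonoid β] (T : Finset α) {k : ℕ}
    (h : T.card = k) (f : α → β) : ∏ i, f (T.orderEmbOfFin h i) = ∏ t ∈ T, f t := by
  conv_rhs => rw [← T.map_orderEmbOfFin_univ h, Finset.prod_map]
  rfl

variable {s : Set ℝ} {μ : Measure ℝ} [IsFiniteMeasure μ] [NullSingletonClass μ] {q : ℝ≥0∞}

lemma exists_monic_eLpNorm_lt (hs : Bornology.IsBounded s) (hμ : μ ≠ 0) (hμs : ∀ᵐ x ∂μ, x ∈ s)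
    (hq : 1 ≤ q) {p g : ℝ[X]} (hpg : (p * g).Monic) (hdeg : p.natDegree ≠ 0)
    (hp : ∀ x ∈ s, 0 ≤ p.eval x) :
    ∃ ψ : ℝ[X], ψ.Monic ∧ ψ.natDegree = (p * g).natDegree ∧
      eLpNorm (fun x ↦ ψ.eval x) q μ < eLpNorm (fun x ↦ (p * g).eval x) q μ := by
  have hp₀ : p ≠ 0 := left_ne_zero_of_mul hpg.ne_zero
  have hg₀ : g ≠ 0 := right_ne_zero_of_mul hpg.ne_zero
  obtain ⟨M, hM, hpM⟩ := exists_forall_abs_eval_le hs p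
  obtain ⟨G, -, hgG⟩ := exists_forall_abs_eval_le hs g
  have hg : MemLp (fun x ↦ g.eval x) q μ :=
    .of_bound g.continuous.aestronglyMeasurable G (hμs.mono hgG)
  have hg_norm : eLpNorm (fun x ↦ g.eval x) q μ ≠ 0 := by
    rw [Ne, eLpNorm_eq_zero_iff hg.1 (zero_lt_one.trans_le hq).ne']
    intro h
    have : NeBot (ae μ) := ae_neBot.2 hμ
    obtain ⟨x, hx, hx'⟩ := (h.and (ae_eval_ne_zero hg₀)).exists
    exact hx' hx
  have hp_pos : ∀ᵐ x ∂μ, 0 < p.eval x := by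
    filter_upwards [hμs, ae_eval_ne_zero hp₀] with x hxs hx
    exact (hp x hxs).lt_of_ne' hx
  obtain ⟨t, ht⟩ := (eventually_eLpNorm_sub_mul_lt hq p.continuous.measurable hM hp_pos
    (hμs.mono fun x hx ↦ (le_abs_self _).trans (hpM x hx)) hg hg_norm).exists
  have hlt : (C t * g).natDegree < (p * g).natDegree := by
    refine (natDegree_C_mul_le t g).trans_lt ?_
    rw [natDegree_mul hp₀ hg₀]
    lia
  exact ⟨p * g - C t * g, hpg.sub_of_left (degree_lt_degree hlt),
    natDegree_sub_eq_left_of_natDegree_lt hlt, by simpa [sub_mul] using ht⟩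

theorem minimizing_monic_poly_roots_general (hs : IsPreconnected s) (hsb : Bornology.IsBounded s)
    (hμ : μ ≠ 0) (hμs : ∀ᵐ x ∂μ, x ∈ s) (hq : 1 ≤ q) {φ : ℝ[X]} (hmonic : φ.Monic)
    (hmin : ∀ ψ : ℝ[X], ψ.Monic → ψ.natDegree = φ.natDegree →
      eLpNorm (fun x ↦ φ.eval x) q μ ≤ eLpNorm (fun x ↦ ψ.eval x) q μ) :
    ∃ t : Fin φ.natDegree → ℝ, StrictMono t ∧ (∀ i, t i ∈ s) ∧ φ = ∏ i, (X - C (t i)) := by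
  obtain ⟨p, T, hφ, hTs, hp⟩ := exists_eq_mul_prod_X_sub_C hs φ
  have hconst {p g : ℝ[X]} (h : φ = p * g) (hp : ∀ x ∈ s, 0 ≤ p.eval x) : p.natDegree = 0 := by
    by_contra hdeg
    obtain ⟨ψ, hψ, hψdeg, hlt⟩ := exists_monic_eLpNorm_lt hsb hμ hμs hq (h ▸ hmonic) hdeg hp
    exact (hmin ψ hψ (h ▸ hψdeg)).not_gt (h ▸ hlt)
  have hp_deg : p.natDegree = 0 := by
    rcases hp with hp | hp
    · exact hconst hφ hp
    · rw [← natDegree_neg]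
      exact hconst (hφ.trans (neg_mul_neg _ _).symm) (by simpa using hp)
  have hp_one : p = 1 :=
    ((monic_prod_X_sub_C id T).of_mul_monic_right (hφ ▸ hmonic)).natDegree_eq_zero.1 hp_deg
  rw [hp_one, one_mul] at hφ
  have hcard : T.card = φ.natDegree := by
    rw [hφ, natDegree_finsetProd_X_sub_C_eq_card]
  exact ⟨T.orderEmbOfFin hcard, (T.orderEmbOfFin hcard).strictMono,
    fun i ↦ hTs (T.orderEmbOfFin_mem hcard i), by rw [prod_orderEmbOfFin T hcard (X - C ·), ← hφ]⟩

end Polynomial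

/-- If a monic polynomial of degree `m ≥ 2` minimizes the `L^q` norm on `[a,b]` among all
monic polynomials of degree `m`, then all its `m` roots are real, simple, and lie in `[a,b]`. -/
theorem minimizing_monic_poly_roots
    (a b : ℝ) (hab : a < b) (m : ℕ) (hm : 2 ≤ m) (q : ℝ≥0∞) (hq : 1 ≤ q)
    (φ : Polynomial ℝ) (hmonic : φ.Monic) (hdeg : φ.natDegree = m)
    (hmin : ∀ ψ : Polynomial ℝ, ψ.Monic → ψ.natDegree = m →
      eLpNorm (fun x => φ.eval x) q (volume.restrict (Set.Icc a b))
        ≤ eLpNorm (fun x => ψ.eval x) q (volume.restrict (Set.Icc a b))) :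
    ∃ t : Fin m → ℝ, StrictMono t ∧ (∀ i, t i ∈ Set.Icc a b) ∧
      φ = ∏ i : Fin m, (Polynomial.X - Polynomial.C (t i)) := by
  subst hdeg
  exact minimizing_monic_poly_roots_general isPreconnected_Icc (Metric.isBounded_Icc a b)
    (by simpa using hab) (ae_restrict_mem measurableSet_Icc) hq hmonic hmin
end

section
/- The total variation of the polynomial x ↦ 2^{1-2n}(b-a)^n [T_n((2x-a-b)/(b-a)) − 1] on [a,b] equals 2^{2-2n}(b-a)^n n. -/
open Polynomial

/-! Affine changes of variable and of value reduce the claim to the variation of `T_n` on `[-1, 1]`.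
The substitution `x = cos t` turns this into the variation of `cos` on `[0, n * π]`. Since shifting
by `π` only changes the sign of `cos`, each of the `n` half-periods contributes the same variation
as `[0, π]`, on which `cos` decreases from `1` to `-1`. -/

open Set
open scoped ENNReal

section Scaling

variable {α E F : Type*} [LinearOrder α] [PseudoEMetricSpace E] [PseudoEMetricSpace F]

theorem eVariationOn_eq_mul_of_edist_eq_mul {f : α → E} {g : α → F} {s : Set α} {r : ℝ≥0∞}
    (h : ∀ x ∈ s, ∀ y ∈ s, edist (g x) (g y) = r * edist (f x) (f y)) :
    eVariationOn g s = r * eVariationOn f s := by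
  simp only [eVariationOn, ENNReal.mul_iSup, Finset.mul_sum]
  exact iSup_congr fun p => Finset.sum_congr rfl fun i _ => h _ (p.2.2.2 _) _ (p.2.2.2 _)

theorem eVariationOn_const_smul {𝕜 G : Type*} [SeminormedRing 𝕜] [SeminormedAddCommGroup G]
    [Module 𝕜 G] [NormSMulClass 𝕜 G] (c : 𝕜) (f : α → G) (s : Set α) :
    eVariationOn (fun x => c • f x) s = ‖c‖ₑ * eVariationOn f s :=
  eVariationOn_eq_mul_of_edist_eq_mul fun x _ y _ => by
    rw [edist_smul₀, ENNReal.smul_def, smul_eq_mul, enorm_eq_nnnorm]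

theorem eVariationOn_sub_const {G : Type*} [SeminormedAddCommGroup G]
    (d : G) (f : α → G) (s : Set α) :
    eVariationOn (fun x => f x - d) s = eVariationOn f s := by
  simp only [eVariationOn, edist_sub_right]

end Scaling

section Translation

variable {α E : Type*} [AddCommGroup α] [LinearOrder α] [IsOrderedAddMonoid α]
  [PseudoEMetricSpace E] {f : α → E} {c : α}

theorem eVariationOn_Icc_add_right
    (hf : ∀ x y, edist (f (x + c)) (f (y + c)) = edist (f x) (f y)) (a b : α) :
    eVariationOn f (Icc (a + c) (b + c)) = eVariationOn f (Icc a b) := by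
  have hshift : MonotoneOn (fun x => x + c) (Icc a b) := fun _ _ _ _ hxy => by
    simpa using hxy
  rw [← image_add_const_Icc, ← eVariationOn.comp_eq_of_monotoneOn f _ hshift]
  simpa using eVariationOn_eq_mul_of_edist_eq_mul (r := 1) fun x _ y _ => by
    simpa using hf x y

theorem eVariationOn_Icc_add_nsmul (hc : 0 ≤ c)
    (hf : ∀ x y, edist (f (x + c)) (f (y + c)) = edist (f x) (f y)) (a : α) (n : ℕ) :
    eVariationOn f (Icc a (a + n • c)) = n * eVariationOn f (Icc a (a + c)) := by
  induction n generalizing a with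
  | zero => simp [eVariationOn.subsingleton]
  | succ n ih =>
    have hsplit := eVariationOn.Icc_add_Icc f (s := univ) (le_add_of_nonneg_right hc)
      (le_add_of_nonneg_right (nsmul_nonneg hc n)) (mem_univ (a + c))
    simp only [univ_inter] at hsplit
    rw [succ_nsmul', ← add_assoc, ← hsplit, ih, eVariationOn_Icc_add_right hf]
    push_cast
    ring

end Translation

section Affine

variable {K E : Type*} [Field K] [LinearOrder K] [IsStrictOrderedRing K] [PseudoEMetricSpace E]
  {a b : K}

theorem eVariationOn_comp_mul_add_Icc (f : K → E) {c : K} (hc : 0 ≤ c) (d : K) (hab : a ≤ b) :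
    eVariationOn (fun x => f (c * x + d)) (Icc a b) =
      eVariationOn f (Icc (c * a + d) (c * b + d)) := by
  have hmono : MonotoneOn (fun x => c * x + d) (Icc a b) := fun _ _ _ _ hxy => by
    dsimp only
    gcongr
  have himage : (fun x => c * x + d) '' Icc a b = Icc (c * a + d) (c * b + d) := by
    rw [← image_add_const_Icc, ← image_mul_left_Icc hc hab, image_image]
  rw [← himage, ← eVariationOn.comp_eq_of_monotoneOn f _ hmono, Function.comp_def]

theorem eVariationOn_comp_rescale_Icc (f : K → E) (hab : a < b) :
    eVariationOn (fun x => f ((2 * x - a - b) / (b - a))) (Icc a b) =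
      eVariationOn f (Icc (-1) 1) := by
  have hba : 0 < b - a := sub_pos.2 hab
  have haffine (x : K) : (2 * x - a - b) / (b - a) = 2 / (b - a) * x + -(a + b) / (b - a) := by
    ring
  simp only [haffine]
  rw [eVariationOn_comp_mul_add_Icc f (div_pos two_pos hba).le _ hab.le, ← haffine, ← haffine]
  congr 2 <;> field_simp <;> ring

end Affine

theorem eVariationOn_cos_Icc_zero_pi : eVariationOn Real.cos (Icc 0 Real.pi) = 2 := by
  rw [← Function.id_comp Real.cos,
    eVariationOn.comp_eq_of_antitoneOn _ _ Real.strictAntiOn_cos.antitoneOn,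
    Real.bijOn_cos.image_eq, eVariationOn_id_Icc]
  norm_num

theorem eVariationOn_cos_Icc_zero_nat_mul_pi (n : ℕ) :
    eVariationOn Real.cos (Icc 0 (n * Real.pi)) = n * 2 := by
  have hanti (x y : ℝ) :
      edist (Real.cos (x + Real.pi)) (Real.cos (y + Real.pi)) =
        edist (Real.cos x) (Real.cos y) := by
    simp only [Real.cos_add_pi, edist_neg_neg]
  simpa [eVariationOn_cos_Icc_zero_pi] using
    eVariationOn_Icc_add_nsmul Real.pi_pos.le hanti 0 n

theorem eVariationOn_eval_T_real (k : ℤ) :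
    eVariationOn (fun x => (Chebyshev.T ℝ k).eval x) (Icc (-1) 1) = k.natAbs * 2 := by
  calc eVariationOn (fun x => (Chebyshev.T ℝ k).eval x) (Icc (-1) 1)
    _ = eVariationOn (fun t => (Chebyshev.T ℝ k).eval (Real.cos t)) (Icc 0 Real.pi) := by
      rw [← Real.bijOn_cos.image_eq,
        ← eVariationOn.comp_eq_of_antitoneOn _ _ Real.strictAntiOn_cos.antitoneOn,
        Function.comp_def]
    _ = eVariationOn (fun t => Real.cos (k.natAbs * t)) (Icc 0 Real.pi) := by
      simp only [← Chebyshev.T_natAbs ℝ k, Chebyshev.T_real_cos, Int.cast_natCast]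
    _ = eVariationOn Real.cos (Icc 0 (k.natAbs * Real.pi)) := by
      simpa using eVariationOn_comp_mul_add_Icc Real.cos (Nat.cast_nonneg k.natAbs) 0
        Real.pi_pos.le
    _ = k.natAbs * 2 := eVariationOn_cos_Icc_zero_nat_mul_pi _

/-- The total variation of `x ↦ 2^{1-2n}(b-a)ⁿ[Tₙ((2x-a-b)/(b-a)) − 1]` on `[a,b]`
equals `2^{2-2n}(b-a)ⁿ n`. -/
theorem variation_chebyshev_poly (a b : ℝ) (hab : a < b) (n : ℕ) (hn : 1 ≤ n) :
    eVariationOn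
        (fun x => (b - a) ^ n / 2 ^ (2 * n - 1) *
          ((Polynomial.Chebyshev.T ℝ n).eval ((2 * x - a - b) / (b - a)) - 1))
        (Set.Icc a b)
      = ENNReal.ofReal ((b - a) ^ n * n / 2 ^ (2 * n - 2)) := by
  set c : ℝ := (b - a) ^ n / 2 ^ (2 * n - 1) with hc
  have hc_nonneg : 0 ≤ c := by
    have := sub_pos.2 hab
    positivity
  have hconst : c * (n * 2) = (b - a) ^ n * n / 2 ^ (2 * n - 2) := by
    rw [hc, show 2 * n - 1 = 2 * n - 2 + 1 by omega, pow_succ]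
    field_simp
  calc
    _ = ‖c‖ₑ * eVariationOn
          (fun x => (Chebyshev.T ℝ n).eval ((2 * x - a - b) / (b - a)) - 1) (Icc a b) :=
      eVariationOn_const_smul c _ _
    _ = ‖c‖ₑ * eVariationOn (fun x => (Chebyshev.T ℝ n).eval x) (Icc (-1) 1) := by
      rw [eVariationOn_sub_const,
        eVariationOn_comp_rescale_Icc (fun x => (Chebyshev.T ℝ n).eval x) hab]
    _ = ENNReal.ofReal c * (n * 2) := by
      rw [eVariationOn_eval_T_real, Int.natAbs_natCast, Real.enorm_of_nonneg hc_nonneg]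
    _ = ENNReal.ofReal (c * (n * 2)) := by
      rw [ENNReal.ofReal_mul hc_nonneg, ENNReal.ofReal_mul n.cast_nonneg,
        ENNReal.ofReal_natCast, ENNReal.ofReal_ofNat]
    _ = ENNReal.ofReal ((b - a) ^ n * n / 2 ^ (2 * n - 2)) := by rw [hconst]
end
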